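/- Let G be a finite solvable PST-group and let Z_∞(G) denote the hypercenter of G. If G/Z_∞(G) is a solvable SST-group (resp. a solvable BT-group), then G is a solvable SST-group (resp. a solvable BT-group). -/

import Mathlib

open scoped Pointwise

section Defs

variable {G : Type*} [Group G]

/-- `K` is an SS-permutable supplement of `H` in `G`: `HK = G` and `H` permutes with
every Sylow subgroup of `K`. -/
def IsSSSupplement (H K : Subgroup G) : Prop :=
  (H : Set G) * (K : Set G) = Set.univ ∧
    ∀ (p : ℕ) [Fact p.Prime] (P : Sylow p K),
      (H : Set G) * ((P.toSubgroup.map K.subtype : Subgroup G) : Set G) =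
        ((P.toSubgroup.map K.subtype : Subgroup G) : Set G) * (H : Set G)

/-- `H` is SS-permutable in `G`: `H` has a supplement `K` such that `H` permutes with
every Sylow subgroup of `K`. -/
def IsSSPermutable (H : Subgroup G) : Prop :=
  ∃ K : Subgroup G, IsSSSupplement H K

/-- `H` is NSS-permutable in `G`: `H` has a normal supplement `K` such that `H` permutes
with every Sylow subgroup of `K`. -/
def IsNSSPermutable (H : Subgroup G) : Prop :=
  ∃ K : Subgroup G, K.Normal ∧ IsSSSupplement H K

/-- `H` is S-permutable in `G`: it permutes with every Sylow subgroup of `G`. -/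
def IsSPermutable (H : Subgroup G) : Prop :=
  ∀ (p : ℕ) [Fact p.Prime] (P : Sylow p G),
    (H : Set G) * ((P : Subgroup G) : Set G) = ((P : Subgroup G) : Set G) * (H : Set G)

/-- `H` is semipermutable in `G`: `HX = XH` for every subgroup `X` with `gcd(|H|,|X|) = 1`. -/
def IsSemipermutable (H : Subgroup G) : Prop :=
  ∀ X : Subgroup G, Nat.Coprime (Nat.card H) (Nat.card X) →
    (H : Set G) * (X : Set G) = (X : Set G) * (H : Set G)

/-- `H` is S-semipermutable in `G`: `HQ = QH` for every Sylow `q`-subgroup `Q` of `G`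
with `q` a prime not dividing `|H|`. -/
def IsSSemipermutable (H : Subgroup G) : Prop :=
  ∀ (q : ℕ) [Fact q.Prime], ¬ q ∣ Nat.card H → ∀ Q : Sylow q G,
    (H : Set G) * ((Q : Subgroup G) : Set G) = ((Q : Subgroup G) : Set G) * (H : Set G)

end Defs

/-- `G` is an SST-group: SS-permutability is a transitive relation. -/
def IsSSTGroup (G : Type*) [Group G] : Prop :=
  ∀ H K : Subgroup G, H ≤ K → IsSSPermutable (H.subgroupOf K) → IsSSPermutable K →
    IsSSPermutable H

/-- `G` is an NSST-group: NSS-permutability is a transitive relation. -/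
def IsNSSTGroup (G : Type*) [Group G] : Prop :=
  ∀ H K : Subgroup G, H ≤ K → IsNSSPermutable (H.subgroupOf K) → IsNSSPermutable K →
    IsNSSPermutable H

/-- `G` is a PST-group: S-permutability is a transitive relation. -/
def IsPSTGroup (G : Type*) [Group G] : Prop :=
  ∀ H K : Subgroup G, H ≤ K → IsSPermutable (H.subgroupOf K) → IsSPermutable K →
    IsSPermutable H

/-- `G` is a BT-group: semipermutability is a transitive relation. -/
def IsBTGroup (G : Type*) [Group G] : Prop :=
  ∀ H K : Subgroup G, H ≤ K → IsSemipermutable (H.subgroupOf K) → IsSemipermutable K →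
    IsSemipermutable H

/-!
Let `L` be the nilpotent residual of the finite solvable PST-group `G`. For each prime `p`, either
`G` has a normal `p`-complement, or a Sylow `p`-subgroup `P` of `G` is normal, all its subgroups
are normal in `G`, `P = [P, G]` and `P ∩ Z(G) = 1`. The alternative at `p` is decided in `G/N`,
where `N` is the normal `p`-complement of the nilpotent group `[G, G]`; there the Sylow
`p`-subgroup is normal and elements of order prime to `p` act on it as power automorphisms. Hence
`L` is a normal Hall subgroup, all its subgroups are normal in `G`, and its order is prime to that
of the hypercenter.

In an SST- or BT-group with nilpotent quotient by such an `L`, every subgroup `H` is SS-permutable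
or semipermutable, by transitivity along `H ≤ HL ≤ G`. This applies to `G/Z`, and the conclusion
lifts to `G`: subgroups `H` and `X` with `H ∩ L` and `X ∩ L` of coprime orders permute as soon as
they permute modulo `Z` and modulo `L`, because the preimage `W` of `(HZ/Z)(XZ/Z)` satisfies
`W ∩ L = (H ∩ L)(X ∩ L)` by comparing orders.
-/

section SolvablePST

open Subgroup
open scoped commutatorElement

section Permuting

variable {G G' : Type*} [Group G] [Group G'] {H X : Subgroup G}

theorem commute_coe_of_mul_subset (h : (X : Set G) * (H : Set G) ⊆ (H : Set G) * (X : Set G)) :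
    Commute (H : Set G) (X : Set G) := by
  refine Set.Subset.antisymm ?_ h
  simpa only [mul_inv_rev, inv_coe_set] using Set.inv_subset_inv.mpr h

theorem commute_coe_of_normal (H X : Subgroup G) [X.Normal] : Commute (H : Set G) (X : Set G) :=
  set_mul_normal_comm _ _

theorem coe_sup_of_commute (h : Commute (H : Set G) (X : Set G)) :
    ((H ⊔ X : Subgroup G) : Set G) = (H : Set G) * (X : Set G) := by
  rw [sup_eq_closure_mul]
  refine Set.Subset.antisymm (fun g hg => ?_) subset_closure
  induction hg using closure_induction with
  | mem _ hg => exact hg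
  | one => exact ⟨1, H.one_mem, 1, X.one_mem, mul_one 1⟩
  | mul a b _ _ ha hb =>
    have hab := Set.mul_mem_mul ha hb
    rwa [h.symm.mul_mul_mul_comm, coe_mul_coe, coe_mul_coe] at hab
  | inv a _ ha => rwa [← Set.mem_inv, mul_inv_rev, inv_coe_set, inv_coe_set, ← h.eq]

theorem card_sup_dvd_of_commute (h : Commute (H : Set G) (X : Set G)) :
    Nat.card (H ⊔ X : Subgroup G) ∣ Nat.card H * Nat.card X := by
  have hcosets : ((X : Set G).image (↑) : Set (G ⧸ H)) = MulAction.orbit X ((1 : G) : G ⧸ H) := by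
    rw [Set.image_eq_range]
    exact congrArg Set.range (funext fun x => congrArg _ (mul_one (x : G)).symm)
  rw [← SetLike.coe_sort_coe, coe_sup_of_commute h, h.eq,
    card_mul_eq_card_subgroup_mul_card_quotient, hcosets,
    Nat.card_congr (MulAction.orbitEquivQuotientStabilizer X ((1 : G) : G ⧸ H))]
  exact mul_dvd_mul_left _ (card_quotient_dvd_card _)

theorem commute_coe_map (f : G →* G') (h : Commute (H : Set G) (X : Set G)) :
    Commute (H.map f : Set G') (X.map f : Set G') := by
  rw [coe_map, coe_map, Commute, SemiconjBy, ← Set.image_mul, h.eq, Set.image_mul]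

theorem exists_inv_mul_mul_inv_mem_ker {f : G →* G'}
    (h : Commute (H.map f : Set G') (X.map f : Set G')) {x y : G} (hx : x ∈ X) (hy : y ∈ H) :
    ∃ a ∈ H, ∃ b ∈ X, a⁻¹ * (x * y) * b⁻¹ ∈ f.ker := by
  obtain ⟨_, ⟨a, ha, rfl⟩, _, ⟨b, hb, rfl⟩, hab⟩ : f x * f y ∈ (H.map f : Set G') * X.map f :=
    h.eq ▸ Set.mul_mem_mul (mem_map_of_mem f hx) (mem_map_of_mem f hy)
  refine ⟨a, ha, b, hb, ?_⟩
  rw [MonoidHom.mem_ker, map_mul, map_mul, map_mul, ← hab, map_inv, map_inv,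
    inv_mul_cancel_left, mul_inv_cancel]

theorem commute_coe_of_map {f : G →* G'} (hf : f.ker ≤ H)
    (h : Commute (H.map f : Set G') (X.map f : Set G')) : Commute (H : Set G) (X : Set G) := by
  refine commute_coe_of_mul_subset ?_
  rintro _ ⟨x, hx, y, hy, rfl⟩
  obtain ⟨a, ha, b, hb, hab⟩ := exists_inv_mul_mul_inv_mem_ker h hx hy
  exact ⟨a * (a⁻¹ * (x * y) * b⁻¹), H.mul_mem ha (hf hab), b, hb, by group⟩

end Permuting

section Hall

variable {G : Type*} [Group G]

theorem card_mul_relIndex_of_le {H K : Subgroup G} (h : H ≤ K) :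
    Nat.card H * H.relIndex K = Nat.card K := by
  rw [← relIndex_bot_left, ← relIndex_bot_left, relIndex_mul_relIndex _ _ _ bot_le h]

theorem card_comap_of_surjective {G' : Type*} [Group G'] {f : G →* G'}
    (hf : Function.Surjective f) (C : Subgroup G') :
    Nat.card (C.comap f) = Nat.card f.ker * Nat.card C := by
  rw [← card_mul_relIndex_of_le (ker_le_comap f C), relIndex_ker,
    map_comap_eq_self_of_surjective hf]

theorem coprime_card_of_isPGroup {p n : ℕ} [hp : Fact p.Prime] {P : Subgroup G} [Finite P]
    (hP : IsPGroup p P) (hn : ¬ p ∣ n) : (Nat.card P).Coprime n := by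
  obtain ⟨k, hk⟩ := IsPGroup.iff_card.mp hP
  rw [hk]
  exact Nat.Coprime.pow_left k ((Nat.Prime.coprime_iff_not_dvd hp.out).mpr hn)

theorem le_of_card_coprime_index {P L : Subgroup G} [L.Normal]
    (h : (Nat.card P).Coprime L.index) : P ≤ L := by
  rw [← relIndex_eq_one]
  exact Nat.eq_one_of_dvd_coprimes h (relIndex_dvd_card L P) (relIndex_dvd_index_of_normal L P)

theorem le_of_isPGroup_of_not_dvd_index {p : ℕ} [Fact p.Prime] {P L : Subgroup G} [Finite P]
    [L.Normal] (hP : IsPGroup p P) (h : ¬ p ∣ L.index) : P ≤ L :=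
  le_of_card_coprime_index (coprime_card_of_isPGroup hP h)

theorem characteristic_of_card_coprime_index {L : Subgroup G} [L.Normal]
    (h : (Nat.card L).Coprime L.index) : L.Characteristic :=
  characteristic_iff_map_le.mpr fun φ =>
    le_of_card_coprime_index (h.coprime_dvd_left (card_map_dvd L φ.toMonoidHom))

variable [Finite G]

theorem eq_top_of_forall_exists_sylow_le {U : Subgroup G}
    (h : ∀ (p : ℕ) [Fact p.Prime], ∃ P : Sylow p G, (P : Subgroup G) ≤ U) : U = ⊤ := by
  rw [← index_eq_one]
  by_contra hne
  obtain ⟨p, hp, hd⟩ := Nat.exists_prime_and_dvd hne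
  have := Fact.mk hp
  obtain ⟨P, hP⟩ := h p
  exact P.not_dvd_index (hd.trans (index_dvd_of_le hP))

theorem normal_of_forall_sylow_le_normalizer {X : Subgroup G}
    (h : ∀ (p : ℕ) [Fact p.Prime], ∃ P : Sylow p G, (P : Subgroup G) ≤ normalizer (X : Set G)) :
    X.Normal :=
  normalizer_eq_top_iff.mp (eq_top_of_forall_exists_sylow_le h)

theorem normal_of_forall_sylow_map_normal {X : Subgroup G}
    (h : ∀ (p : ℕ) [Fact p.Prime] (P : Sylow p X), ((P : Subgroup X).map X.subtype).Normal) :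
    X.Normal := by
  have htop : X.normalCore.subgroupOf X = ⊤ := by
    refine eq_top_of_forall_exists_sylow_le fun p hp => ?_
    obtain ⟨P⟩ : Nonempty (Sylow p X) := inferInstance
    have := h p P
    exact ⟨P, map_le_iff_le_comap.mp (normal_le_normalCore.mpr (map_subtype_le _))⟩
  rw [← le_antisymm (normalCore_le X) (subgroupOf_eq_top.mp htop)]
  infer_instance

end Hall

section NormalPComplement

variable {p : ℕ} {G : Type*} [Group G]

/-- `G` has a normal `p`-complement, that is, `G` is `p`-nilpotent. The condition on the index is
spelled as `∃ n, C.index = p ^ n` so that it does not mention the quotient `G ⧸ C`. -/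
def HasNormalPComplement (p : ℕ) (G : Type*) [Group G] : Prop :=
  ∃ C : Subgroup G, C.Normal ∧ ¬ p ∣ Nat.card C ∧ ∃ n, C.index = p ^ n

variable [Finite G] [hp : Fact p.Prime]

theorem hasNormalPComplement_of_le_centralizer (P : Sylow p G) [(P : Subgroup G).Normal]
    (h : ∀ (q : ℕ) [Fact q.Prime], q ≠ p → ∀ Q : Sylow q G,
      (Q : Subgroup G) ≤ centralizer ((P : Subgroup G) : Set G)) :
    HasNormalPComplement p G := by
  obtain ⟨R, hR⟩ := exists_right_complement'_of_coprime P.card_coprime_index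
  have hRcard : Nat.card R = (P : Subgroup G).index := hR.symm.index_eq_card.symm
  have hRP : R ≤ centralizer ((P : Subgroup G) : Set G) := by
    refine le_of_card_coprime_index (Nat.coprime_of_dvd fun q hq hqR hqC => ?_)
    have := Fact.mk hq
    obtain ⟨Q⟩ : Nonempty (Sylow q G) := inferInstance
    refine Q.not_dvd_index (hqC.trans (index_dvd_of_le (h q ?_ Q)))
    rintro rfl
    exact P.not_dvd_index (hRcard ▸ hqR)
  refine ⟨R, ?_, hRcard ▸ P.not_dvd_index, ?_⟩
  · rw [← normalizer_eq_top_iff, eq_top_iff, ← hR.sup_eq_top]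
    refine sup_le (le_normalizer_iff.mpr fun x hx y hy => ?_) Subgroup.le_normalizer
    rwa [mem_centralizer_iff.mp (hRP hy) x hx, mul_inv_cancel_right]
  · rw [hR.index_eq_card]
    exact IsPGroup.iff_card.mp P.isPGroup'

end NormalPComplement

section Nilpotent

theorem orderOf_commutatorElement_dvd_right {G : Type*} [Group G] {a b : G}
    (h : Commute ⁅a, b⁆ b) : orderOf ⁅a, b⁆ ∣ orderOf b := by
  refine orderOf_dvd_of_pow_eq_one ?_
  calc ⁅a, b⁆ ^ orderOf b = ⁅a, b⁆ ^ orderOf b * b ^ orderOf b := by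
        rw [pow_orderOf_eq_one b, mul_one]
    _ = (a * b * a⁻¹) ^ orderOf b := by
        rw [← h.mul_pow, commutatorElement_def, inv_mul_cancel_right]
    _ = 1 := by rw [conj_pow, pow_orderOf_eq_one, mul_one, mul_inv_cancel]

theorem commute_of_coprime_orderOf {N : Type*} [Group N] [Group.IsNilpotent N] {a b : N}
    (h : (orderOf a).Coprime (orderOf b)) : Commute a b := by
  revert a b
  refine Group.nilpotent_center_quotient_ind (P := fun N _ _ => ∀ {a b : N},
    (orderOf a).Coprime (orderOf b) → Commute a b) N
    (fun N _ _ a b _ => Subsingleton.elim _ _) fun N _ _ ih a b h => ?_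
  have hab : ⁅a, b⁆ ∈ center N := by
    rw [← QuotientGroup.eq_one_iff, ← QuotientGroup.mk'_apply, map_commutatorElement,
      commutatorElement_eq_one_iff_commute]
    exact ih ((h.coprime_dvd_left (orderOf_map_dvd _ a)).coprime_dvd_right (orderOf_map_dvd _ b))
  have hba : ⁅b, a⁆ ∈ center N := commutatorElement_inv a b ▸ inv_mem hab
  have ha : orderOf ⁅a, b⁆ ∣ orderOf a := by
    rw [← commutatorElement_inv, orderOf_inv]
    exact orderOf_commutatorElement_dvd_right (mem_center_iff.mp hba a).symm
  rw [← commutatorElement_eq_one_iff_commute, ← orderOf_eq_one_iff]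
  exact Nat.eq_one_of_dvd_coprimes h ha
    (orderOf_commutatorElement_dvd_right (mem_center_iff.mp hab b).symm)

theorem commute_of_mem_of_coprime_card {N : Type*} [Group N] [Group.IsNilpotent N]
    {H X : Subgroup N} (h : (Nat.card H).Coprime (Nat.card X)) {a b : N} (ha : a ∈ H)
    (hb : b ∈ X) : Commute a b :=
  commute_of_coprime_orderOf
    ((h.coprime_dvd_left (orderOf_dvd_natCard H ha)).coprime_dvd_right (orderOf_dvd_natCard X hb))

theorem commute_coe_of_coprime_card {N : Type*} [Group N] [Group.IsNilpotent N]
    {H X : Subgroup N} (h : (Nat.card H).Coprime (Nat.card X)) :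
    Commute (H : Set N) (X : Set N) := by
  refine commute_coe_of_mul_subset ?_
  rintro _ ⟨x, hx, y, hy, rfl⟩
  exact ⟨y, hy, x, hx, (commute_of_mem_of_coprime_card h hy hx).eq⟩

variable {N : Type*} [Group N] [Finite N] [Group.IsNilpotent N]

theorem hasNormalPComplement_of_isNilpotent (p : ℕ) [Fact p.Prime] : HasNormalPComplement p N := by
  obtain ⟨P⟩ : Nonempty (Sylow p N) := inferInstance
  refine hasNormalPComplement_of_le_centralizer P fun q _ hqp Q x hx => ?_
  refine mem_centralizer_iff.mpr fun y hy => ?_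
  exact commute_of_mem_of_coprime_card
    (IsPGroup.coprime_card_of_ne p q hqp.symm _ _ P.isPGroup' Q.isPGroup') hy hx

theorem isSPermutable_of_isNilpotent (H : Subgroup N) : IsSPermutable H :=
  fun _ _ P => commute_coe_of_normal H P

theorem sylow_subset_mul_inf {p : ℕ} [hp : Fact p.Prime] {H K : Subgroup N}
    (h : (H : Set N) * (K : Set N) = Set.univ) (S : Sylow p N) :
    ((S : Subgroup N) : Set N) ⊆ (H : Set N) * ((K ⊓ S : Subgroup N) : Set N) := by
  intro s hs
  obtain ⟨a, ha, b, hb, rfl⟩ : s ∈ (H : Set N) * (K : Set N) := h ▸ Set.mem_univ s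
  obtain ⟨C, _, hpC, n, hn⟩ := hasNormalPComplement_of_isNilpotent (N := N) p
  have hSC : (S : Subgroup N) ⊓ C = ⊥ :=
    (disjoint_of_coprime_natCard (coprime_card_of_isPGroup S.isPGroup' hpC)).eq_bot
  have hindex : C.index.Coprime (S : Subgroup N).index := by
    rw [hn]
    exact Nat.Coprime.pow_left n ((Nat.Prime.coprime_iff_not_dvd hp.out).mpr S.not_dvd_index)
  -- `x ↦ x ^ e` projects `N` onto `S` along `C`.
  obtain ⟨e, heC, heS⟩ := Nat.chineseRemainder hindex 1 0
  have hpow_mem (x : N) : x ^ e ∈ (S : Subgroup N) := by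
    obtain ⟨c, rfl⟩ := Nat.modEq_zero_iff_dvd.mp heS
    rw [pow_mul]
    exact pow_mem (pow_index_mem _ x) c
  have hpow_mk (x : N ⧸ C) : x ^ e = x := by
    conv_rhs => rw [← pow_one x]
    exact pow_eq_pow_iff_modEq.mpr (heC.of_dvd (orderOf_dvd_natCard x))
  have hdiff : (a * b)⁻¹ * (a ^ e * b ^ e) ∈ (S : Subgroup N) ⊓ C := by
    refine mem_inf.mpr ⟨mul_mem (inv_mem hs) (mul_mem (hpow_mem a) (hpow_mem b)),
      QuotientGroup.eq.mp ?_⟩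
    simp only [QuotientGroup.mk_mul, QuotientGroup.mk_pow, hpow_mk]
  rw [hSC, mem_bot, inv_mul_eq_one] at hdiff
  exact ⟨a ^ e, H.pow_mem ha e, b ^ e, ⟨K.pow_mem hb e, hpow_mem b⟩, hdiff.symm⟩

theorem isSSSupplement_of_isNilpotent {H K : Subgroup N}
    (h : (H : Set N) * (K : Set N) = Set.univ) : IsSSSupplement H K := by
  refine ⟨h, fun p hp P => commute_coe_of_mul_subset ?_⟩
  obtain ⟨S⟩ : Nonempty (Sylow p N) := inferInstance
  have hPS : (P : Subgroup K).map K.subtype ≤ S :=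
    le_of_isPGroup_of_not_dvd_index (P.isPGroup'.map _) S.not_dvd_index
  have hSP : K ⊓ S ≤ (P : Subgroup K).map K.subtype := by
    rw [inf_comm, ← subgroupOf_map_subtype]
    exact map_mono (le_of_isPGroup_of_not_dvd_index
      (S.isPGroup'.comap_of_injective K.subtype K.subtype_injective) P.not_dvd_index)
  rintro _ ⟨x, hx, y, hy, rfl⟩
  have hconj : y⁻¹ * x * y ∈ (S : Subgroup N) := by
    simpa only [inv_inv] using (inferInstance : (S : Subgroup N).Normal).conj_mem x (hPS hx) y⁻¹
  obtain ⟨a, ha, b, hb, hab⟩ := sylow_subset_mul_inf h S hconj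
  refine ⟨y * a, H.mul_mem hy ha, b, hSP hb, ?_⟩
  simp only at hab ⊢
  rw [mul_assoc, hab]
  group

end Nilpotent

section PST

variable {G G' : Type*} [Group G] [Group G']

theorem isSPermutable_of_normal (H : Subgroup G) [H.Normal] : IsSPermutable H :=
  fun _ _ P => (commute_coe_of_normal (P : Subgroup G) H).symm

theorem isSPermutable_comap_iff [Finite G] {f : G →* G'} (hf : Function.Surjective f)
    {H : Subgroup G'} : IsSPermutable (H.comap f) ↔ IsSPermutable H := by
  refine ⟨fun hH p _ Q => ?_, fun hH p _ P => commute_coe_of_map (comap_mono bot_le) ?_⟩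
  · obtain ⟨P, rfl⟩ := Sylow.mapSurjective_surjective hf p Q
    have := commute_coe_map f (hH p P)
    rwa [map_comap_eq_self_of_surjective hf] at this
  · rw [map_comap_eq_self_of_surjective hf]
    exact hH p (P.mapSurjective hf)

theorem IsPSTGroup.of_surjective [Finite G] (hG : IsPSTGroup G) {f : G →* G'}
    (hf : Function.Surjective f) : IsPSTGroup G' := by
  intro H K hHK hH hK
  rw [← isSPermutable_comap_iff hf] at hK ⊢
  refine hG _ _ (comap_mono hHK) ?_ hK
  exact (isSPermutable_comap_iff (f.subgroupComap_surjective_of_surjective K hf)).mpr hH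

theorem IsPSTGroup.sylow_le_normalizer [Finite G] (hG : IsPSTGroup G) {p q : ℕ} [Fact p.Prime]
    [Fact q.Prime] (hqp : q ≠ p) {P X : Subgroup G} [hPn : P.Normal] (hP : IsPGroup p P)
    (hX : X ≤ P) (Q : Sylow q G) : (Q : Subgroup G) ≤ normalizer (X : Set G) := by
  have := hP.isNilpotent
  have hXs : IsSPermutable X :=
    hG X P hX (isSPermutable_of_isNilpotent _) (isSPermutable_of_normal P)
  refine le_normalizer_iff.mpr fun g hg x hx => ?_
  obtain ⟨y, hy, h, hh, hyh⟩ : g * x ∈ (X : Set G) * (Q : Subgroup G) :=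
    (hXs q Q).symm ▸ Set.mul_mem_mul hg hx
  have hconj : g * x * g⁻¹ = y * (h * g⁻¹) := by rw [← mul_assoc, ← hyh]
  have hmem : h * g⁻¹ ∈ P ⊓ Q := by
    refine mem_inf.mpr ⟨?_, mul_mem hh (inv_mem hg)⟩
    rw [← P.mul_mem_cancel_left (hX hy), ← hconj]
    exact hPn.conj_mem x (hX hx) g
  rw [(IsPGroup.disjoint_of_ne p q hqp.symm _ _ hP Q.isPGroup').eq_bot, mem_bot] at hmem
  rwa [hconj, hmem, mul_one]

end PST

section PowerAutomorphism

variable {p : ℕ} {G : Type*} [Group G] {g : G}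

theorem commute_of_commute_pow (hgp : (orderOf g).Coprime p) {w : G}
    (hgw : g * w * g⁻¹ ∈ zpowers w) (hwp : Commute g (w ^ p))
    (hgu : ∀ u ∈ zpowers w, u ^ p = 1 → Commute g u) : Commute g w := by
  have hcomm : Commute w⁻¹ (g * w * g⁻¹) := by
    obtain ⟨k, hk⟩ := hgw
    exact hk ▸ ((Commute.refl w).zpow_right k).inv_left
  have heq : ⁅w⁻¹, g⁆ = w⁻¹ * (g * w * g⁻¹) := by
    rw [commutatorElement_def]
    group
  have hmem : ⁅w⁻¹, g⁆ ∈ zpowers w := heq ▸ mul_mem (inv_mem (mem_zpowers w)) hgw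
  have hpow : ⁅w⁻¹, g⁆ ^ p = 1 := by
    rw [heq, hcomm.mul_pow, conj_pow, hwp.eq, mul_inv_cancel_right, inv_pow, inv_mul_cancel]
  have hone : ⁅w⁻¹, g⁆ = 1 := orderOf_eq_one_iff.mp <| Nat.eq_one_of_dvd_coprimes hgp
    (orderOf_commutatorElement_dvd_right (hgu _ hmem hpow).symm) (orderOf_dvd_of_pow_eq_one hpow)
  exact (Commute.inv_left_iff.mp (commutatorElement_eq_one_iff_commute.mp hone)).symm

variable [hp : Fact p.Prime]

theorem mem_zpowers_of_mem_zpowers_of_ne_one {y z : G} (hy : y ^ p = 1) (hz : z ∈ zpowers y)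
    (hz1 : z ≠ 1) : y ∈ zpowers z := by
  have hy1 : y ≠ 1 := by
    rintro rfl
    exact hz1 (by simpa only [zpowers_one_eq_bot, mem_bot] using hz)
  have hcard : Nat.card (zpowers y) = p := by rw [Nat.card_zpowers, orderOf_eq_prime hy hy1]
  obtain ⟨n, hn⟩ := mem_zpowers_of_prime_card hcard (g := ⟨z, hz⟩) (g' := ⟨y, mem_zpowers y⟩)
    fun h => hz1 (congrArg Subtype.val h)
  exact ⟨n, congrArg Subtype.val hn⟩

theorem commute_of_conj_mem_zpowers {x y : G} (hxy : Commute x y) (hx : x ^ p = 1)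
    (hy : y ^ p = 1) (hx1 : x ≠ 1) (hgx : Commute g x) (hgy : g * y * g⁻¹ ∈ zpowers y)
    (hgxy : g * (x * y) * g⁻¹ ∈ zpowers (x * y)) : Commute g y := by
  by_contra hne
  have hmem : ⁅g, y⁆ ∈ zpowers y := mul_mem hgy (inv_mem (mem_zpowers y))
  have hmem' : ⁅g, y⁆ ∈ zpowers (x * y) := by
    have hc : Commute x (g * y * g⁻¹) := by
      obtain ⟨k, hk⟩ := hgy
      exact hk ▸ hxy.zpow_right k
    have hconj : g * (x * y) * g⁻¹ = g * y * g⁻¹ * x := by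
      rw [← hc.eq, ← mul_assoc g, hgx.eq]
      group
    have : ⁅g, y⁆ = g * (x * y) * g⁻¹ * (x * y)⁻¹ := by
      rw [hconj, hxy.eq, mul_inv_rev, commutatorElement_def]
      group
    exact this ▸ mul_mem hgxy (inv_mem (mem_zpowers _))
  rw [← commutatorElement_eq_one_iff_commute] at hne
  have hxy_mem : x * y ∈ zpowers y := by
    have hpow : (x * y) ^ p = 1 := by rw [hxy.mul_pow, hx, hy, one_mul]
    exact zpowers_le.mpr hmem (mem_zpowers_of_mem_zpowers_of_ne_one hpow hmem' hne)
  have hx_mem : x ∈ zpowers y := (mul_mem_cancel_right (mem_zpowers y)).mp hxy_mem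
  obtain ⟨k, rfl⟩ := mem_zpowers_of_mem_zpowers_of_ne_one hy hx_mem hx1
  exact hne (commutatorElement_eq_one_iff_commute.mpr (hgx.zpow_right k))

theorem exists_mem_zpowers_orderOf_eq {P : Subgroup G} (hP : IsPGroup p P) {x : G} (hx : x ∈ P)
    (hx1 : x ≠ 1) : ∃ u ∈ zpowers x, orderOf u = p := by
  obtain ⟨k, hk⟩ := IsPGroup.iff_orderOf.mp hP ⟨x, hx⟩
  rw [orderOf_mk] at hk
  have hk0 : k ≠ 0 := by
    rintro rfl
    exact hx1 (orderOf_eq_one_iff.mp hk)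
  refine ⟨x ^ (orderOf x / p), npow_mem_zpowers x _, orderOf_pow_orderOf_div ?_ ?_⟩
  · exact hk ▸ pow_ne_zero k hp.out.ne_zero
  · exact hk ▸ dvd_pow_self p hk0

variable {P : Subgroup G} [Finite P]

theorem commute_of_pow_eq_one_of_conj_mem_zpowers (hP : IsPGroup p P)
    (hg : ∀ x ∈ P, g * x * g⁻¹ ∈ zpowers x) {x : G} (hx : x ∈ P) (hx1 : x ≠ 1)
    (hgx : Commute g x) {y : G} (hy : y ∈ P) (hyp : y ^ p = 1) : Commute g y := by
  have : Nontrivial P := ⟨⟨x, hx⟩, 1, fun h => hx1 (congrArg Subtype.val h)⟩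
  have : Nontrivial (center P) := hP.center_nontrivial
  obtain ⟨⟨⟨c, hc⟩, hcP⟩, hc1⟩ := exists_ne (1 : center P)
  have hc_comm (w : G) (hw : w ∈ P) : Commute w c :=
    congrArg Subtype.val (mem_center_iff.mp hcP ⟨w, hw⟩)
  obtain ⟨u, hux, hu⟩ := exists_mem_zpowers_orderOf_eq hP hx hx1
  obtain ⟨z, ⟨n, rfl⟩, hz⟩ := exists_mem_zpowers_orderOf_eq hP hc
    fun h => hc1 (Subtype.ext (Subtype.ext h))
  have huP : u ∈ P := zpowers_le.mpr hx hux
  have hzP : c ^ n ∈ P := zpow_mem hc n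
  have hgu : Commute g u := by
    obtain ⟨k, rfl⟩ := hux
    exact hgx.zpow_right k
  have pow_eq_one {v : G} (hv : orderOf v = p) : v ^ p = 1 := hv ▸ pow_orderOf_eq_one v
  have ne_one {v : G} (hv : orderOf v = p) : v ≠ 1 := by
    rintro rfl
    exact hp.out.ne_one (hv.symm.trans orderOf_one)
  have hgz : Commute g (c ^ n) :=
    commute_of_conj_mem_zpowers ((hc_comm u huP).zpow_right n) (pow_eq_one hu) (pow_eq_one hz)
      (ne_one hu) hgu (hg _ hzP) (hg _ (mul_mem huP hzP))
  exact commute_of_conj_mem_zpowers ((hc_comm y hy).zpow_right n).symm (pow_eq_one hz) hyp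
    (ne_one hz) hgz (hg y hy) (hg _ (mul_mem hzP hy))

theorem commute_of_forall_conj_mem_zpowers (hP : IsPGroup p P) (hgp : (orderOf g).Coprime p)
    (hg : ∀ x ∈ P, g * x * g⁻¹ ∈ zpowers x) {x : G} (hx : x ∈ P) (hx1 : x ≠ 1)
    (hgx : Commute g x) {w : G} (hw : w ∈ P) : Commute g w := by
  obtain ⟨k, hk⟩ := hP ⟨w, hw⟩
  replace hk : w ^ p ^ k = 1 := congrArg Subtype.val hk
  induction k generalizing w with
  | zero =>
    rw [pow_zero, pow_one] at hk
    exact hk ▸ Commute.one_right g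
  | succ k ih =>
    refine commute_of_commute_pow hgp (hg w hw) (ih (pow_mem hw p) ?_) fun u hu hup => ?_
    · rw [← pow_mul, ← pow_succ', hk]
    · exact commute_of_pow_eq_one_of_conj_mem_zpowers hP hg hx hx1 hgx (zpowers_le.mpr hw hu) hup

end PowerAutomorphism

section NormalSylow

variable {p : ℕ} {G : Type*} [Group G]

/-- `G` has a normal Sylow `p`-subgroup `P` all of whose subgroups are normal in `G`, with
`P = [P, G]` and `P ∩ Z(G) = 1`. In a finite solvable PST-group this is the alternative to
`HasNormalPComplement p G`. -/
def HasNoncentralNormalSylow (p : ℕ) (G : Type*) [Group G] : Prop :=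
  ∃ P : Sylow p G, (∀ X ≤ (P : Subgroup G), X.Normal) ∧
    (P : Subgroup G) ≤ ⁅(P : Subgroup G), (⊤ : Subgroup G)⁆ ∧ (P : Subgroup G) ⊓ center G = ⊥

theorem exists_commutatorElement_eq_of_fixedPointFree {P : Subgroup G} [P.Normal] [Finite P]
    {g : G} (hg : ∀ x ∈ P, Commute g x → x = 1) {y : G} (hy : y ∈ P) : ∃ x ∈ P, ⁅x, g⁆ = y := by
  have hfree : MonoidHom.FixedPointFree (MulAut.conjNormal (H := P) g) := fun x hx =>
    Subtype.ext <| hg x x.2 <| by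
      have : g * x * g⁻¹ = x := (MulAut.conjNormal_apply g x).symm.trans (congrArg _ hx)
      exact mul_inv_eq_iff_eq_mul.mp this
  obtain ⟨x, hx⟩ := hfree.commutatorMap_surjective ⟨y, hy⟩
  refine ⟨x, x.2, Eq.trans ?_ (congrArg Subtype.val hx)⟩
  rw [MonoidHom.commutatorMap_apply, coe_div, MulAut.conjNormal_apply, commutatorElement_def,
    div_eq_mul_inv]
  group

variable [Finite G] [hp : Fact p.Prime]

theorem IsPSTGroup.eq_one_of_commute (hG : IsPSTGroup G) {q : ℕ} [hq : Fact q.Prime] (hqp : q ≠ p)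
    {P : Subgroup G} [P.Normal] (hP : IsPGroup p P) {Q : Sylow q G} {g : G} (hgQ : g ∈ Q)
    (hgP : g ∉ centralizer (P : Set G)) {x : G} (hx : x ∈ P) (hgx : Commute g x) : x = 1 := by
  by_contra hx1
  refine hgP (mem_centralizer_iff.mpr fun w hw => ?_)
  have hcop : (orderOf g).Coprime p := by
    obtain ⟨k, hk⟩ := IsPGroup.iff_orderOf.mp Q.isPGroup' ⟨g, hgQ⟩
    rw [orderOf_mk] at hk
    exact hk ▸ Nat.Coprime.pow_left k ((Nat.coprime_primes hq.out hp.out).mpr hqp)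
  have hnorm (v : G) (hv : v ∈ P) : g * v * g⁻¹ ∈ zpowers v :=
    le_normalizer_iff.mp (hG.sylow_le_normalizer hqp hP (zpowers_le.mpr hv) Q) g hgQ v
      (mem_zpowers v)
  exact (commute_of_forall_conj_mem_zpowers hP hcop hnorm hx hx1 hgx hw).eq.symm

theorem IsPSTGroup.normal_of_le_of_fixedPointFree (hG : IsPSTGroup G) {q : ℕ} [Fact q.Prime]
    (hqp : q ≠ p) (P : Sylow p G) [(P : Subgroup G).Normal] {Q : Sylow q G} {g : G} (hgQ : g ∈ Q)
    (hg : ∀ x ∈ P, Commute g x → x = 1) {X : Subgroup G} (hX : X ≤ P) : X.Normal := by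
  refine normal_of_forall_sylow_le_normalizer fun r hr => ?_
  obtain rfl | hrp := eq_or_ne r p
  · refine ⟨P, fun y hy => ?_⟩
    obtain ⟨x, _, rfl⟩ := exists_commutatorElement_eq_of_fixedPointFree hg hy
    have hconj : x * g * x⁻¹ ∈ x • Q := Sylow.smul_def (g := x) ▸ ⟨g, hgQ, rfl⟩
    exact mul_mem (hG.sylow_le_normalizer hqp P.isPGroup' hX (x • Q) hconj)
      (inv_mem (hG.sylow_le_normalizer hqp P.isPGroup' hX Q hgQ))
  · obtain ⟨S⟩ : Nonempty (Sylow r G) := inferInstance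
    exact ⟨S, hG.sylow_le_normalizer hrp P.isPGroup' hX S⟩

theorem IsPSTGroup.hasNormalPComplement_or_of_normal_sylow (hG : IsPSTGroup G) (P : Sylow p G)
    [(P : Subgroup G).Normal] : HasNormalPComplement p G ∨ HasNoncentralNormalSylow p G := by
  by_cases hc : ∀ (q : ℕ) [Fact q.Prime], q ≠ p → ∀ Q : Sylow q G,
      (Q : Subgroup G) ≤ centralizer ((P : Subgroup G) : Set G)
  · exact .inl (hasNormalPComplement_of_le_centralizer P hc)
  push Not at hc
  obtain ⟨q, hq, hqp, Q, hQ⟩ := hc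
  obtain ⟨g, hgQ, hgP⟩ := SetLike.not_le_iff_exists.mp hQ
  have hfix (x : G) (hx : x ∈ P) (hgx : Commute g x) : x = 1 :=
    hG.eq_one_of_commute hqp P.isPGroup' hgQ hgP hx hgx
  refine .inr ⟨P, fun X => hG.normal_of_le_of_fixedPointFree hqp P hgQ hfix, fun y hy => ?_, ?_⟩
  · obtain ⟨x, hx, rfl⟩ := exists_commutatorElement_eq_of_fixedPointFree hfix hy
    exact commutator_mem_commutator hx (mem_top g)
  · refine eq_bot_iff.mpr fun z hz => ?_
    obtain ⟨hzP, hzc⟩ := mem_inf.mp hz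
    exact mem_bot.mpr (hfix z hzP (mem_center_iff.mp hzc g))

end NormalSylow

section Commutator

variable {G : Type*} [Group G]

theorem map_commutator_of_surjective {G' : Type*} [Group G'] {f : G →* G'}
    (hf : Function.Surjective f) : (commutator G).map f = commutator G' := by
  rw [commutator_def, map_commutator, map_top_of_surjective f hf, commutator_def]

theorem commutator_le_centralizer_of_isCyclic (N : Subgroup G) [N.Normal] [IsCyclic N] :
    commutator G ≤ centralizer (N : Set G) := by
  rw [commutator_def, commutator_le]
  intro x _ y _
  have hone : MulAut.conjNormal (H := N) ⁅x, y⁆ = 1 := by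
    rw [map_commutatorElement, commutatorElement_eq_one_iff_mul_comm]
    apply (IsCyclic.mulAutMulEquiv N).injective
    rw [map_mul, map_mul, mul_comm]
  refine mem_centralizer_iff.mpr fun n hn => ?_
  have hconj : ⁅x, y⁆ * n * ⁅x, y⁆⁻¹ = n := by
    rw [← MulAut.conjNormal_apply ⁅x, y⁆ (⟨n, hn⟩ : N), hone, MulAut.one_apply]
  exact (mul_inv_eq_iff_eq_mul.mp hconj).symm

theorem isNilpotent_commutator_of_isCyclic (N : Subgroup G) [N.Normal] [IsCyclic N]
    [Group.IsNilpotent (commutator (G ⧸ N))] : Group.IsNilpotent (commutator G) := by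
  have hle : commutator G ≤ (commutator (G ⧸ N)).comap (QuotientGroup.mk' N) :=
    map_le_iff_le_comap.mp (map_commutator_of_surjective (QuotientGroup.mk'_surjective N)).le
  refine Subgroup.isNilpotent_of_ker_le_center
    (((QuotientGroup.mk' N).comp (commutator G).subtype).codRestrict
      (commutator (G ⧸ N)) fun x => hle x.2)
    ((MonoidHom.ker_codRestrict _ _ _).trans_le ?_)
  refine fun x hx => mem_center_iff.mpr fun y => Subtype.ext ?_
  have hxN : (x : G) ∈ N := (QuotientGroup.eq_one_iff _).mp hx
  exact (mem_centralizer_iff.mp (commutator_le_centralizer_of_isCyclic N y.2) x hxN).symm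

variable [Finite G]

theorem exists_isPGroup_normal_ne_bot [Group.IsSolvable G] [Nontrivial G] :
    ∃ p, p.Prime ∧ ∃ P : Subgroup G, P.Normal ∧ IsPGroup p P ∧ P ≠ ⊥ := by
  classical
  have hsol : ∃ n, derivedSeries G n = ⊥ := Group.IsSolvable.solvable
  have hpos : Nat.find hsol ≠ 0 := fun h => top_ne_bot <| by
    simpa only [h, derivedSeries_zero] using Nat.find_spec hsol
  obtain ⟨n, hn⟩ := Nat.exists_eq_succ_of_ne_zero hpos
  set A := derivedSeries G n
  have hA : A ≠ ⊥ := Nat.find_min hsol (hn ▸ n.lt_succ_self)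
  have hA_comm : IsMulCommutative A := by
    rw [← le_centralizer_iff_isMulCommutative, ← commutator_eq_bot_iff_le_centralizer,
      ← derivedSeries_succ, ← Nat.succ_eq_add_one, ← hn]
    exact Nat.find_spec hsol
  obtain ⟨p, hp, hpA⟩ := Nat.exists_prime_and_dvd (mt card_eq_one.mp hA)
  have := Fact.mk hp
  obtain ⟨P⟩ : Nonempty (Sylow p A) := inferInstance
  have : (P : Subgroup A).Characteristic := P.characteristic_of_normal inferInstance
  refine ⟨p, hp, (P : Subgroup A).map A.subtype, inferInstance, P.isPGroup'.map _, fun h => ?_⟩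
  exact P.ne_bot_of_dvd_card hpA ((map_eq_bot_iff_of_injective _ A.subtype_injective).mp h)

variable {p : ℕ} [hp : Fact p.Prime]

theorem exists_mem_centralizer_ne_one {P S : Subgroup G} [P.Normal] (hP : IsPGroup p P)
    (hP1 : P ≠ ⊥) (hS : IsPGroup p S) : ∃ x ∈ P, x ≠ 1 ∧ S ≤ centralizer {x} := by
  let _ : MulAction S P := MulAction.compHom P ((MulAut.conjNormal (H := P)).comp S.subtype)
  have hsmul (s : S) (x : P) : ((s • x : P) : G) = s * x * (s : G)⁻¹ := rfl
  have : Nontrivial P := (nontrivial_iff_ne_bot P).mpr hP1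
  obtain ⟨n, hn0, hn⟩ := hP.nontrivial_iff_card.mp inferInstance
  obtain ⟨x, hx, hx1⟩ := hS.exists_fixed_point_of_prime_dvd_card_of_fixed_point P
    (hn ▸ dvd_pow_self p hn0.ne') (a := 1) fun s => Subtype.ext <| by
      rw [hsmul, coe_one, mul_one, mul_inv_cancel]
  refine ⟨x, x.2, fun h => hx1 (Subtype.ext h.symm), fun s hs => ?_⟩
  have hfix : s * x * s⁻¹ = x := congrArg Subtype.val (hx ⟨s, hs⟩)
  exact mem_centralizer_singleton_iff.mpr (mul_inv_eq_iff_eq_mul.mp hfix)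

theorem IsPSTGroup.exists_normal_card_prime [Group.IsSolvable G] [Nontrivial G]
    (hG : IsPSTGroup G) : ∃ N : Subgroup G, N.Normal ∧ (Nat.card N).Prime := by
  obtain ⟨p, hp, P, _, hP, hP1⟩ := exists_isPGroup_normal_ne_bot (G := G)
  have := Fact.mk hp
  obtain ⟨S⟩ : Nonempty (Sylow p G) := inferInstance
  obtain ⟨x, hx, hx1, hSx⟩ := exists_mem_centralizer_ne_one hP hP1 S.isPGroup'
  obtain ⟨u, hux, hu⟩ := exists_mem_zpowers_orderOf_eq hP hx hx1
  refine ⟨zpowers u, normal_of_forall_sylow_le_normalizer fun q hq => ?_, ?_⟩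
  · obtain rfl | hqp := eq_or_ne q p
    · refine ⟨S, le_normalizer_iff.mpr fun s hs y hy => ?_⟩
      obtain ⟨k, rfl⟩ := zpowers_le.mpr hux hy
      have hsx : Commute s x := mem_centralizer_singleton_iff.mp (hSx hs)
      rwa [(hsx.zpow_right k).eq, mul_inv_cancel_right]
    · obtain ⟨Q⟩ : Nonempty (Sylow q G) := inferInstance
      exact ⟨Q, hG.sylow_le_normalizer hqp hP (zpowers_le.mpr (zpowers_le.mpr hx hux)) Q⟩
  · rwa [Nat.card_zpowers, hu]

theorem IsPSTGroup.isNilpotent_commutator [Group.IsSolvable G] (hG : IsPSTGroup G) :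
    Group.IsNilpotent (commutator G) := by
  induction hcard : Nat.card G using Nat.strong_induction_on generalizing G with
  | _ n ih =>
    obtain hG1 | hG1 := subsingleton_or_nontrivial G
    · infer_instance
    obtain ⟨N, hN, hNp⟩ := hG.exists_normal_card_prime
    have := Fact.mk hNp
    have : IsCyclic N := isCyclic_of_prime_card rfl
    have hlt : Nat.card (G ⧸ N) < n := by
      rw [← hcard, card_eq_card_quotient_mul_card_subgroup N]
      exact lt_mul_of_one_lt_right Nat.card_pos hNp.one_lt
    have := ih _ hlt (hG.of_surjective (QuotientGroup.mk'_surjective N)) rfl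
    exact isNilpotent_commutator_of_isCyclic N

end Commutator

section Dichotomy

variable {p : ℕ} {G : Type*} [Group G]

theorem HasNormalPComplement.of_quotient [hp : Fact p.Prime] {N : Subgroup G} [N.Normal]
    (hN : ¬ p ∣ Nat.card N) (h : HasNormalPComplement p (G ⧸ N)) : HasNormalPComplement p G := by
  obtain ⟨C, hC, hpC, n, hn⟩ := h
  refine ⟨C.comap (QuotientGroup.mk' N), hC.comap _, ?_, n, ?_⟩
  · rw [card_comap_of_surjective (QuotientGroup.mk'_surjective N), QuotientGroup.ker_mk']
    exact hp.out.not_dvd_mul hN hpC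
  · rw [index_comap_of_surjective C (QuotientGroup.mk'_surjective N), hn]

theorem sylow_normal_of_isPGroup_commutator (h : IsPGroup p (commutator G)) (P : Sylow p G) :
    (P : Subgroup G).Normal :=
  Subgroup.Normal.of_commutator_le _ (h.le_sylow_of_normal P)

variable [Finite G] [hp : Fact p.Prime]

theorem sylow_normal_of_le_of_isNilpotent {D : Subgroup G} [D.Normal] [Group.IsNilpotent D]
    {S : Sylow p G} (hS : (S : Subgroup G) ≤ D) : (S : Subgroup G).Normal := by
  have : ((S.subtype hS : Sylow p D) : Subgroup D).Characteristic :=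
    (S.subtype hS).characteristic_of_normal inferInstance
  have hmap : ((S.subtype hS : Sylow p D) : Subgroup D).map D.subtype = S := by
    rw [Sylow.coe_subtype, map_subgroupOf_eq_of_le hS]
  rw [← hmap]
  infer_instance

theorem exists_normal_isPGroup_commutator_quotient [Group.IsNilpotent (commutator G)] :
    ∃ (N : Subgroup G) (_ : N.Normal), N ≤ commutator G ∧ ¬ p ∣ Nat.card N ∧
      IsPGroup p (commutator (G ⧸ N)) := by
  obtain ⟨C, _, hpC, n, hn⟩ := hasNormalPComplement_of_isNilpotent (N := commutator G) p
  have : C.Characteristic := characteristic_of_card_coprime_index <| by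
    rw [hn]
    exact (Nat.Coprime.pow_left n ((Nat.Prime.coprime_iff_not_dvd hp.out).mpr hpC)).symm
  set N := C.map (commutator G).subtype
  refine ⟨N, inferInstance, map_subtype_le C, ?_, fun x => ⟨n, ?_⟩⟩
  · rwa [card_map_of_injective (commutator G).subtype_injective]
  · obtain ⟨d, hd, hdx⟩ : (x : G ⧸ N) ∈ (commutator G).map (QuotientGroup.mk' N) := by
      rw [map_commutator_of_surjective (QuotientGroup.mk'_surjective N)]
      exact x.2
    refine Subtype.ext ?_
    rw [coe_pow, ← hdx, ← map_pow, coe_one, QuotientGroup.mk'_apply, QuotientGroup.eq_one_iff]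
    exact ⟨⟨d, hd⟩ ^ p ^ n, hn ▸ pow_index_mem C _, rfl⟩

theorem IsPSTGroup.hasNormalPComplement_or_hasNoncentralNormalSylow [Group.IsSolvable G]
    (hG : IsPSTGroup G) : HasNormalPComplement p G ∨ HasNoncentralNormalSylow p G := by
  have := hG.isNilpotent_commutator
  obtain ⟨N, _, hND, hpN, hN⟩ := exists_normal_isPGroup_commutator_quotient (p := p) (G := G)
  have hsurj := QuotientGroup.mk'_surjective N
  obtain ⟨P₀⟩ : Nonempty (Sylow p (G ⧸ N)) := inferInstance
  have := sylow_normal_of_isPGroup_commutator hN P₀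
  obtain hC | ⟨P, hPX, hPc, -⟩ :=
    (hG.of_surjective hsurj).hasNormalPComplement_or_of_normal_sylow P₀
  · exact .inl (hC.of_quotient hpN)
  obtain ⟨S⟩ : Nonempty (Sylow p G) := inferInstance
  have hSD : (S : Subgroup G) ≤ commutator G := by
    have := hPX P le_rfl
    have hSP : (S : Subgroup G).map (QuotientGroup.mk' N) ≤ P :=
      le_of_isPGroup_of_not_dvd_index (S.isPGroup'.map _) P.not_dvd_index
    have hPD : (P : Subgroup (G ⧸ N)) ≤ (commutator G).map (QuotientGroup.mk' N) := by
      rw [map_commutator_of_surjective hsurj]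
      exact hPc.trans (commutator_mono le_top le_rfl)
    have := map_le_iff_le_comap.mp (hSP.trans hPD)
    rwa [comap_map_eq, QuotientGroup.ker_mk', sup_of_le_left hND] at this
  have := sylow_normal_of_le_of_isNilpotent hSD
  exact hG.hasNormalPComplement_or_of_normal_sylow S

end Dichotomy

section NilpotentResidual

variable {G : Type*} [Group G]

/-- The intersection of the lower central series of `G`. For finite `G` this is the nilpotent
residual, the smallest normal subgroup of `G` with nilpotent quotient. -/
def nilpotentResidual (G : Type*) [Group G] : Subgroup G :=
  ⨅ n, (⊤ : Subgroup G).lowerCentralSeries n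

instance nilpotentResidual_normal : (nilpotentResidual G).Normal :=
  normal_iInf_normal fun _ => inferInstance

theorem nilpotentResidual_le (C : Subgroup G) [C.Normal] [hC : Group.IsNilpotent (G ⧸ C)] :
    nilpotentResidual G ≤ C := by
  obtain ⟨n, hn⟩ := Subgroup.nilpotent_iff_lowerCentralSeries.mp hC
  refine (iInf_le _ n).trans ?_
  rw [← QuotientGroup.ker_mk' C, ← MonoidHom.comap_bot, ← map_le_iff_le_comap, ← hn,
    map_lowerCentralSeries, map_top_of_surjective _ (QuotientGroup.mk'_surjective C)]

theorem le_nilpotentResidual {P : Subgroup G} (hP : P ≤ ⁅P, (⊤ : Subgroup G)⁆) :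
    P ≤ nilpotentResidual G := by
  refine le_iInf fun n => ?_
  induction n with
  | zero => exact le_top
  | succ n ih => exact hP.trans (commutator_mono ih le_rfl)

instance isNilpotent_quotient_nilpotentResidual [Finite G] :
    Group.IsNilpotent (G ⧸ nilpotentResidual G) := by
  obtain ⟨n, hn⟩ := WellFoundedLT.antitone_chain_condition
    (⊤ : Subgroup G).lowerCentralSeries_antitone
  have heq : (⊤ : Subgroup G).lowerCentralSeries n ≤ nilpotentResidual G :=
    le_iInf fun m => (le_total n m).elim (fun h => (hn m h).le)
      fun h => (⊤ : Subgroup G).lowerCentralSeries_antitone h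
  refine Subgroup.nilpotent_iff_lowerCentralSeries.mpr ⟨n, ?_⟩
  rwa [← map_top_of_surjective _ (QuotientGroup.mk'_surjective _), ← map_lowerCentralSeries,
    Subgroup.map_eq_bot_iff, QuotientGroup.ker_mk']

theorem inf_iSup_upperCentralSeries_eq_bot {P : Subgroup G} [P.Normal] (h : P ⊓ center G = ⊥) :
    P ⊓ ⨆ n, Subgroup.upperCentralSeries G n = ⊥ := by
  have hn (n : ℕ) : P ⊓ Subgroup.upperCentralSeries G n = ⊥ := by
    induction n with
    | zero => exact inf_bot_eq P
    | succ n ih =>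
      refine eq_bot_iff.mpr (h ▸ le_inf inf_le_left fun x hx => mem_center_iff.mpr fun y => ?_)
      obtain ⟨hxP, hxZ⟩ := mem_inf.mp hx
      have hxy : ⁅x, y⁆ ∈ P ⊓ Subgroup.upperCentralSeries G n := mem_inf.mpr
        ⟨commutator_le_left P ⊤ (commutator_mem_commutator hxP (mem_top y)),
          Subgroup.mem_upperCentralSeries_succ_iff.mp hxZ y⟩
      rw [ih, mem_bot] at hxy
      exact (commutatorElement_eq_one_iff_mul_comm.mp hxy).symm
  refine eq_bot_iff.mpr fun x hx => ?_
  obtain ⟨hxP, hxZ⟩ := mem_inf.mp hx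
  obtain ⟨n, hxn⟩ :=
    (mem_iSup_of_directed (Subgroup.upperCentralSeries_mono G).directed_le).mp hxZ
  exact hn n ▸ mem_inf.mpr ⟨hxP, hxn⟩

variable [Finite G] [Group.IsSolvable G]

theorem IsPSTGroup.exists_sylow_le_nilpotentResidual (hG : IsPSTGroup G) {p : ℕ}
    [hp : Fact p.Prime] (hpL : p ∣ Nat.card (nilpotentResidual G)) :
    ∃ P : Sylow p G, (P : Subgroup G) ≤ nilpotentResidual G ∧
      (∀ X ≤ (P : Subgroup G), X.Normal) ∧ (P : Subgroup G) ⊓ center G = ⊥ := by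
  obtain ⟨C, _, hpC, n, hn⟩ | ⟨P, hPX, hPc, hPz⟩ :=
    hG.hasNormalPComplement_or_hasNoncentralNormalSylow (p := p)
  · have hquot : IsPGroup p (G ⧸ C) := IsPGroup.of_card (hn : Nat.card _ = _)
    have := hquot.isNilpotent
    exact absurd (hpL.trans (card_dvd_of_le (nilpotentResidual_le C))) hpC
  · exact ⟨P, le_nilpotentResidual hPc, hPX, hPz⟩

theorem IsPSTGroup.coprime_card_nilpotentResidual_index (hG : IsPSTGroup G) :
    (Nat.card (nilpotentResidual G)).Coprime (nilpotentResidual G).index := by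
  refine Nat.coprime_of_dvd fun p hp hpL hpi => ?_
  have := Fact.mk hp
  obtain ⟨P, hPL, -⟩ := hG.exists_sylow_le_nilpotentResidual hpL
  exact P.not_dvd_index (hpi.trans (index_dvd_of_le hPL))

theorem IsPSTGroup.normal_of_le_nilpotentResidual (hG : IsPSTGroup G) {X : Subgroup G}
    (hX : X ≤ nilpotentResidual G) : X.Normal := by
  refine normal_of_forall_sylow_map_normal fun p hp S => ?_
  set Y := (S : Subgroup X).map X.subtype
  have hYp : IsPGroup p Y := S.isPGroup'.map _
  by_cases hpL : p ∣ Nat.card (nilpotentResidual G)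
  · obtain ⟨P, -, hPX, -⟩ := hG.exists_sylow_le_nilpotentResidual hpL
    have := hPX P le_rfl
    exact hPX Y (le_of_isPGroup_of_not_dvd_index hYp P.not_dvd_index)
  · have hYbot : Y = ⊥ := by
      rw [← card_eq_one]
      exact Nat.eq_one_of_dvd_coprimes (coprime_card_of_isPGroup hYp hpL) dvd_rfl
        (card_dvd_of_le ((map_subtype_le _).trans hX))
    rw [hYbot]
    infer_instance

theorem IsPSTGroup.coprime_card_nilpotentResidual_hypercenter (hG : IsPSTGroup G) :
    (Nat.card (nilpotentResidual G)).Coprime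
      (Nat.card (⨆ n, Subgroup.upperCentralSeries G n : Subgroup G)) := by
  refine Nat.coprime_of_dvd fun p hp hpL hpZ => ?_
  have := Fact.mk hp
  obtain ⟨P, -, hPX, hPz⟩ := hG.exists_sylow_le_nilpotentResidual hpL
  have := hPX P le_rfl
  obtain ⟨x, hx⟩ := exists_prime_orderOf_dvd_card' p hpZ
  rw [← orderOf_coe] at hx
  have hzp : IsPGroup p (zpowers (x : G)) :=
    IsPGroup.of_card (n := 1) (by rw [Nat.card_zpowers, hx, pow_one])
  have hxP : (x : G) ∈ P :=
    le_of_isPGroup_of_not_dvd_index hzp P.not_dvd_index (mem_zpowers _)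
  have hx1 := mem_inf.mpr ⟨hxP, x.2⟩
  rw [inf_iSup_upperCentralSeries_eq_bot hPz, mem_bot] at hx1
  exact hp.ne_one (hx.symm.trans (hx1 ▸ orderOf_one))

end NilpotentResidual

section NilpotentQuotient

variable {G : Type*} [Group G]

theorem normal_of_forall_le_normal {L K : Subgroup G} (hL : ∀ X ≤ L, X.Normal)
    {P : Subgroup K} (hP : P ≤ L.subgroupOf K) : P.Normal := by
  have := hL (P.map K.subtype) (map_le_iff_le_comap.mpr hP)
  rw [← comap_map_eq_self_of_injective K.subtype_injective P]
  infer_instance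

theorem isSSSupplement_sup_of_forall_le_normal {L : Subgroup G} (hL : ∀ X ≤ L, X.Normal)
    (H : Subgroup G) : IsSSSupplement (H.subgroupOf (H ⊔ L)) (L.subgroupOf (H ⊔ L)) := by
  refine ⟨Set.eq_univ_iff_forall.mpr ?_, fun p _ P => ?_⟩
  · have := hL L le_rfl
    rintro ⟨g, hg⟩
    obtain ⟨h, hh, l, hl, rfl⟩ := mem_sup_of_normal_right.mp hg
    exact ⟨⟨h, mem_sup_left hh⟩, hh, ⟨l, mem_sup_right hl⟩, hl, rfl⟩
  · have := normal_of_forall_le_normal hL (map_subtype_le (P : Subgroup (L.subgroupOf (H ⊔ L))))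
    exact commute_coe_of_normal _ _

variable {L : Subgroup G} [L.Normal] [Group.IsNilpotent (G ⧸ L)]

theorem isSemipermutable_of_le {K : Subgroup G} (hK : L ≤ K) : IsSemipermutable K :=
  fun _ hX => commute_coe_of_map ((QuotientGroup.ker_mk' L).trans_le hK) <|
    commute_coe_of_coprime_card <|
      (hX.coprime_dvd_left (card_map_dvd _ _)).coprime_dvd_right (card_map_dvd _ _)

theorem IsBTGroup.isSemipermutable (hG : IsBTGroup G) (hL : ∀ X ≤ L, X.Normal)
    (H : Subgroup G) : IsSemipermutable H := by
  refine hG H (H ⊔ L) le_sup_left (fun X hX => ?_) (isSemipermutable_of_le le_sup_right)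
  have hindex : L.relIndex (H ⊔ L) ∣ Nat.card (H.subgroupOf (H ⊔ L)) := by
    rw [relIndex_sup_right, Nat.card_congr (subgroupOfEquivOfLe le_sup_left).toEquiv]
    exact relIndex_dvd_card L H
  have := normal_of_forall_le_normal hL
    (le_of_card_coprime_index (hX.symm.coprime_dvd_right hindex))
  exact commute_coe_of_normal _ _

variable [Finite G]

theorem isSSSupplement_top_of_le {K : Subgroup G} (hK : L ≤ K) : IsSSSupplement K ⊤ := by
  refine ⟨by rw [coe_top, Set.mul_univ (OneMemClass.coe_nonempty K)], fun p _ P => ?_⟩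
  have hsurj : Function.Surjective ((QuotientGroup.mk' L).comp (⊤ : Subgroup G).subtype) :=
    (QuotientGroup.mk'_surjective L).comp fun g => ⟨⟨g, mem_top g⟩, rfl⟩
  have hn : (P.mapSurjective hsurj : Subgroup (G ⧸ L)).Normal := inferInstance
  rw [Sylow.coe_mapSurjective, ← map_map] at hn
  exact commute_coe_of_map ((QuotientGroup.ker_mk' L).trans_le hK) (commute_coe_of_normal _ _)

theorem IsSSTGroup.isSSPermutable (hG : IsSSTGroup G) (hL : ∀ X ≤ L, X.Normal)
    (H : Subgroup G) : IsSSPermutable H :=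
  hG H (H ⊔ L) le_sup_left ⟨_, isSSSupplement_sup_of_forall_le_normal hL H⟩
    ⟨⊤, isSSSupplement_top_of_le le_sup_right⟩

end NilpotentQuotient

section HypercentralQuotient

variable {G G' : Type*} [Group G] [Group G'] {f : G →* G'} {L : Subgroup G}

theorem forall_le_map_normal (hf : Function.Surjective f) (hL : ∀ X ≤ L, X.Normal) :
    ∀ Y ≤ L.map f, Y.Normal := by
  intro Y hY
  have hmap : (L ⊓ Y.comap f).map f = Y :=
    SetLike.coe_injective ((Set.image_inter_preimage f L Y).trans (Set.inter_eq_right.mpr hY))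
  rw [← hmap]
  exact (hL _ inf_le_left).map f hf

theorem isNilpotent_quotient_map [L.Normal] [(L.map f).Normal] [Group.IsNilpotent (G ⧸ L)]
    (hf : Function.Surjective f) : Group.IsNilpotent (G' ⧸ L.map f) :=
  Group.nilpotent_of_surjective (QuotientGroup.map L (L.map f) f (le_comap_map f L))
    (QuotientGroup.map_surjective_of_surjective _ _ f (QuotientGroup.mk_surjective.comp hf) _)

theorem mul_comap_eq_univ {H : Subgroup G} {K : Subgroup G'}
    (h : (H.map f : Set G') * (K : Set G') = Set.univ) :
    (H : Set G) * (K.comap f : Set G) = Set.univ := by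
  refine Set.eq_univ_iff_forall.mpr fun x => ?_
  obtain ⟨_, ⟨y, hy, rfl⟩, k, hk, hyk⟩ := h.symm ▸ Set.mem_univ (f x)
  refine ⟨y, hy, y⁻¹ * x, ?_, mul_inv_cancel_left y x⟩
  rwa [SetLike.mem_coe, mem_comap, map_mul, map_inv, ← hyk, inv_mul_cancel_left]

theorem card_comap_sup_dvd (hf : Function.Surjective f) {H X : Subgroup G}
    (h : Commute (H.map f : Set G') (X.map f : Set G')) :
    Nat.card ((H.map f ⊔ X.map f).comap f) ∣ Nat.card f.ker * (Nat.card H * Nat.card X) := by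
  rw [card_comap_of_surjective hf]
  exact mul_dvd_mul_left _ ((card_sup_dvd_of_commute h).trans
    (mul_dvd_mul (card_map_dvd H f) (card_map_dvd X f)))

variable [Finite G]

theorem comap_sup_inf_le [L.Normal] (hf : Function.Surjective f)
    (hcop : (Nat.card L).Coprime L.index) (hker : (Nat.card L).Coprime (Nat.card f.ker))
    {H X : Subgroup G} (h : Commute (H.map f : Set G') (X.map f : Set G'))
    (hHX : (Nat.card (H ⊓ L : Subgroup G)).Coprime (Nat.card (X ⊓ L : Subgroup G))) :
    (H.map f ⊔ X.map f).comap f ⊓ L ≤ (H ⊓ L) ⊔ (X ⊓ L) := by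
  set W := (H.map f ⊔ X.map f).comap f
  have hcard (Y : Subgroup G) :
      Nat.card Y = Nat.card (Y ⊓ L : Subgroup G) * L.relIndex Y := by
    rw [← inf_relIndex_left, card_mul_relIndex_of_le inf_le_left]
  have hWL : Nat.card (W ⊓ L : Subgroup G) ∣ Nat.card L := card_dvd_of_le inf_le_right
  have hrel (Y : Subgroup G) : (Nat.card (W ⊓ L : Subgroup G)).Coprime (L.relIndex Y) :=
    (hcop.coprime_dvd_left hWL).coprime_dvd_right (relIndex_dvd_index_of_normal L Y)
  have hdvd : Nat.card (W ⊓ L : Subgroup G) ∣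
      Nat.card (H ⊓ L : Subgroup G) * Nat.card (X ⊓ L : Subgroup G) := by
    have hHX := (hker.coprime_dvd_left hWL).dvd_of_dvd_mul_left
      ((card_dvd_of_le inf_le_left).trans (card_comap_sup_dvd hf h))
    rw [hcard H, hcard X, mul_mul_mul_comm] at hHX
    exact ((hrel H).mul_right (hrel X)).dvd_of_dvd_mul_right hHX
  have hle : (H ⊓ L) ⊔ (X ⊓ L) ≤ W ⊓ L :=
    sup_le (inf_le_inf_right L (map_le_iff_le_comap.mp le_sup_left))
      (inf_le_inf_right L (map_le_iff_le_comap.mp le_sup_right))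
  refine (eq_of_le_of_card_ge hle (Nat.le_of_dvd Nat.card_pos (hdvd.trans ?_))).ge
  exact hHX.mul_dvd_of_dvd_of_dvd (card_dvd_of_le le_sup_left) (card_dvd_of_le le_sup_right)

theorem commute_coe_of_commute_coe_map [L.Normal] (hf : Function.Surjective f)
    (hcop : (Nat.card L).Coprime L.index) (hker : (Nat.card L).Coprime (Nat.card f.ker))
    {H X : Subgroup G} [(H ⊓ L).Normal] (h : Commute (H.map f : Set G') (X.map f : Set G'))
    (hL : Commute (H.map (QuotientGroup.mk' L) : Set (G ⧸ L))
      (X.map (QuotientGroup.mk' L) : Set (G ⧸ L)))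
    (hHX : (Nat.card (H ⊓ L : Subgroup G)).Coprime (Nat.card (X ⊓ L : Subgroup G))) :
    Commute (H : Set G) (X : Set G) := by
  have hHW : H ≤ (H.map f ⊔ X.map f).comap f := map_le_iff_le_comap.mp le_sup_left
  have hXW : X ≤ (H.map f ⊔ X.map f).comap f := map_le_iff_le_comap.mp le_sup_right
  refine commute_coe_of_mul_subset ?_
  rintro _ ⟨x, hx, y, hy, rfl⟩
  obtain ⟨m, hm, z, hz, hmz⟩ := exists_inv_mul_mul_inv_mem_ker hL hx hy
  rw [QuotientGroup.ker_mk'] at hmz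
  have hmzW := mul_mem (mul_mem (inv_mem (hHW hm)) (mul_mem (hXW hx) (hHW hy)))
    (inv_mem (hXW hz))
  obtain ⟨a, ha, b, hb, hab⟩ := mem_sup_of_normal_left.mp
    (comap_sup_inf_le hf hcop hker h hHX (mem_inf.mpr ⟨hmzW, hmz⟩))
  refine ⟨m * a, H.mul_mem hm ha.1, b * z, X.mul_mem hb.1 hz, ?_⟩
  calc m * a * (b * z) = m * (a * b) * z := by group
    _ = x * y := by rw [hab]; group

variable [L.Normal] [Group.IsNilpotent (G ⧸ L)]

theorem isSemipermutable_of_map (hf : Function.Surjective f)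
    (hcop : (Nat.card L).Coprime L.index) (hL : ∀ X ≤ L, X.Normal)
    (hker : (Nat.card L).Coprime (Nat.card f.ker)) {H : Subgroup G}
    (hH : IsSemipermutable (H.map f)) : IsSemipermutable H := by
  intro X hX
  have := hL (H ⊓ L) inf_le_right
  refine commute_coe_of_commute_coe_map hf hcop hker (hH _ ?_) (commute_coe_of_coprime_card ?_)
    ((hX.coprime_dvd_left (card_dvd_of_le inf_le_left)).coprime_dvd_right
      (card_dvd_of_le inf_le_left))
  all_goals exact (hX.coprime_dvd_left (card_map_dvd _ _)).coprime_dvd_right (card_map_dvd _ _)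

theorem IsSSSupplement.comap (hf : Function.Surjective f)
    (hcop : (Nat.card L).Coprime L.index) (hL : ∀ X ≤ L, X.Normal)
    (hker : (Nat.card L).Coprime (Nat.card f.ker)) {H : Subgroup G} {K : Subgroup G'}
    (hK : IsSSSupplement (H.map f) K) : IsSSSupplement H (K.comap f) := by
  have huniv := mul_comap_eq_univ hK.1
  refine ⟨huniv, fun p hp P => ?_⟩
  set Q := (P : Subgroup (K.comap f)).map (K.comap f).subtype with hQ
  have hQp : IsPGroup p Q := P.isPGroup'.map _
  by_cases hpL : p ∣ Nat.card L
  · have hpi : ¬ p ∣ L.index := fun h => Nat.not_coprime_of_dvd_of_dvd hp.out.one_lt hpL h hcop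
    have := hL Q (le_of_isPGroup_of_not_dvd_index hQp hpi)
    exact commute_coe_of_normal _ _
  have := hL (H ⊓ L) inf_le_right
  refine commute_coe_of_commute_coe_map hf hcop hker ?_ ?_ ?_
  · have h := hK.2 p (P.mapSurjective (f.subgroupComap_surjective_of_surjective K hf))
    rw [Sylow.coe_mapSurjective, map_map] at h
    rw [hQ, map_map]
    exact h
  · set g := QuotientGroup.mk' L
    have hguniv : (H.map g : Set (G ⧸ L)) * ((K.comap f).map g : Set (G ⧸ L)) = Set.univ := by
      rw [coe_map, coe_map, ← Set.image_mul, huniv, Set.image_univ,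
        (QuotientGroup.mk'_surjective L).range_eq]
    have h := (isSSSupplement_of_isNilpotent hguniv).2 p
      (P.mapSurjective (g.subgroupMap_surjective (K.comap f)))
    rw [Sylow.coe_mapSurjective, map_map] at h
    rw [hQ, map_map]
    exact h
  · exact ((coprime_card_of_isPGroup hQp hpL).symm.coprime_dvd_left
      (card_dvd_of_le inf_le_right)).coprime_dvd_right (card_dvd_of_le inf_le_left)

end HypercentralQuotient

theorem lemma31_general {G : Type*} [Group G] [Finite G] [Group.IsSolvable G] (hG : IsPSTGroup G)
    (Z : Subgroup G) [Z.Normal] (hZ : Z ≤ ⨆ n, Subgroup.upperCentralSeries G n) :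
    (IsSSTGroup (G ⧸ Z) → IsSSTGroup G) ∧ (IsBTGroup (G ⧸ Z) → IsBTGroup G) := by
  set f := QuotientGroup.mk' Z
  have hf : Function.Surjective f := QuotientGroup.mk'_surjective Z
  have hcop := hG.coprime_card_nilpotentResidual_index
  have hL (X) (hX : X ≤ nilpotentResidual G) : X.Normal := hG.normal_of_le_nilpotentResidual hX
  have hker : (Nat.card (nilpotentResidual G)).Coprime (Nat.card f.ker) := by
    rw [QuotientGroup.ker_mk']
    exact hG.coprime_card_nilpotentResidual_hypercenter.coprime_dvd_right (card_dvd_of_le hZ)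
  have hfL := forall_le_map_normal hf hL
  have := hfL _ le_rfl
  have := isNilpotent_quotient_map (L := nilpotentResidual G) hf
  refine ⟨fun hGZ H _ _ _ _ => ?_, fun hGZ H _ _ _ _ => ?_⟩
  · obtain ⟨K, hK⟩ := hGZ.isSSPermutable hfL (H.map f)
    exact ⟨K.comap f, hK.comap hf hcop hL hker⟩
  · exact isSemipermutable_of_map hf hcop hL hker (hGZ.isSemipermutable hfL (H.map f))

end SolvablePST

/-- Lemma 3.1. -/
theorem lemma31 {G : Type*} [Group G] [Finite G]
    (hsol : IsSolvable G) (hpst : IsPSTGroup G)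
    (Z : Subgroup G) [Z.Normal] (hZ : Z = ⨆ n, upperCentralSeries G n) :
    ((IsSolvable (G ⧸ Z) ∧ IsSSTGroup (G ⧸ Z)) → IsSolvable G ∧ IsSSTGroup G) ∧
      ((IsSolvable (G ⧸ Z) ∧ IsBTGroup (G ⧸ Z)) → IsSolvable G ∧ IsBTGroup G) := by
  have : Group.IsSolvable G := hsol
  have h := lemma31_general hpst Z hZ.le
  exact ⟨fun hGZ => ⟨hsol, h.1 hGZ.2⟩, fun hGZ => ⟨hsol, h.2 hGZ.2⟩⟩
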